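/- arXiv:2512.17982 — 3 statements merged into one kernel-verified Lean document; each statement's English description precedes it below -/
import Mathlib

section
/- Let ℱ⁻¹ : ℓ²(ℤ²) → L²(𝕋²) be the inverse Fourier transform ℱ⁻¹f(z, w) = Σ_{n,k ∈ ℤ} f(n, k) zⁿ wᵏ and ℱ its inverse. For g = (m', n', k') ∈ ℋ₁ and the unitary representation U_g f(n, k) = f(n − n', k − k' − m'·(n − n')) on ℓ²(ℤ²), the conjugated operator satisfies (ℱ⁻¹ ∘ U_g ∘ ℱ) h(z, w) = h(z·w^{m'}, w) · z^{n'} · w^{k'} for all h ∈ L²(𝕋²) and almost every (z, w) ∈ 𝕋². -/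
/-- The discrete Heisenberg group `ℋ₁`: the set `ℤ³` equipped with the multiplication
`(x', y', z') * (x, y, z) = (x' + x, y' + y, z' + z + x' * y)`. -/
@[ext]
structure Heis where
  x : ℤ
  y : ℤ
  z : ℤ

namespace Heis

instance : Mul Heis := ⟨fun a b => ⟨a.x + b.x, a.y + b.y, a.z + b.z + a.x * b.y⟩⟩
instance : One Heis := ⟨⟨0, 0, 0⟩⟩
instance : Inv Heis := ⟨fun a => ⟨-a.x, -a.y, -a.z + a.x * a.y⟩⟩

theorem mul_def (a b : Heis) :
    a * b = ⟨a.x + b.x, a.y + b.y, a.z + b.z + a.x * b.y⟩ := rfl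
theorem one_def : (1 : Heis) = ⟨0, 0, 0⟩ := rfl
theorem inv_def (a : Heis) : a⁻¹ = ⟨-a.x, -a.y, -a.z + a.x * a.y⟩ := rfl

instance : Group Heis where
  mul_assoc a b c := by ext <;> simp [mul_def] <;> ring
  one_mul a := by ext <;> simp [mul_def, one_def]
  mul_one a := by ext <;> simp [mul_def, one_def]
  inv_mul_cancel a := by ext <;> simp [mul_def, one_def, inv_def] <;> ring

end Heis

open MeasureTheory

noncomputable instance : MeasurableSpace Circle := borel Circle
instance : BorelSpace Circle := ⟨rfl⟩

/-- Haar measure on the unit circle `𝕋 = {z ∈ ℂ : |z| = 1}`. -/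
noncomputable def circleHaar : Measure Circle := Measure.haar

/-- Haar (Lebesgue) measure on the two-torus `𝕋²`. -/
noncomputable def torus2Haar : Measure (Circle × Circle) := circleHaar.prod circleHaar

/-!
The representation is `U_g f = f(g⁻¹ • ·)` for the action `g • (n, k) = (n + n', k + k' + m' n)` of
`ℋ₁` on `ℤ²`, so `U_g` sends the basis vector at `s` to the one at `g • s`. The claimed formula
defines a bounded operator on `L²(𝕋²)`, as the shear `(z, w) ↦ (z w^{m'}, w)` preserves Haar
measure, and it sends the character `z^n w^k` to `z^{n + n'} w^{k + k' + m' n}`, the character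
indexed by `g • (n, k)`. Two bounded operators that agree on an orthonormal basis are equal.
-/

open scoped ENNReal

section WeightedComposition

variable {α β 𝕜 E : Type*} {p : ℝ≥0∞} [Fact (1 ≤ p)] [MeasurableSpace α] [MeasurableSpace β]
  {μ : Measure α} {ν : Measure β} [NontriviallyNormedField 𝕜]
  [NormedAddCommGroup E] [NormedSpace 𝕜 E]

/-- The weighted composition operator `h ↦ w • (h ∘ φ)` on `Lᵖ`, for an essentially bounded
weight `w` and a measure-preserving map `φ`. -/
noncomputable def weightedComp {φ : α → β} (w : Lp 𝕜 ∞ μ) (hφ : MeasurePreserving φ μ ν) :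
    Lp E p ν →L[𝕜] Lp E p μ :=
  (ContinuousLinearMap.lsmul 𝕜 𝕜).holderL μ ∞ p p w ∘L
    (Lp.compMeasurePreservingₗᵢ 𝕜 φ hφ).toContinuousLinearMap

theorem coeFn_weightedComp {φ : α → β} (w : Lp 𝕜 ∞ μ) (hφ : MeasurePreserving φ μ ν)
    (h : Lp E p ν) : weightedComp w hφ h =ᵐ[μ] fun x => w x • h (φ x) := by
  filter_upwards [(ContinuousLinearMap.lsmul 𝕜 𝕜).coeFn_holder (r := p) w
    (Lp.compMeasurePreserving φ hφ h), Lp.coeFn_compMeasurePreserving h hφ] with x hmul hcomp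
  exact hmul.trans (congrArg (w x • ·) hcomp)

variable [TopologicalSpace α] [BorelSpace α] [CompactSpace α] [IsFiniteMeasure μ]
  [SecondCountableTopologyEither α 𝕜]

theorem coeFn_weightedComp_toLp {φ : α → β} (w : C(α, 𝕜)) (hφ : MeasurePreserving φ μ ν)
    (h : Lp E p ν) : weightedComp (w.toLp ∞ μ 𝕜) hφ h =ᵐ[μ] fun x => w x • h (φ x) := by
  filter_upwards [coeFn_weightedComp (w.toLp ∞ μ 𝕜) hφ h,
    w.coeFn_toLp (p := ∞) (𝕜 := 𝕜) μ] with x hcomp hw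
  rw [hcomp, hw]

variable [TopologicalSpace β] [BorelSpace β] [CompactSpace β] [IsFiniteMeasure ν]
  [SecondCountableTopologyEither α E] [SecondCountableTopologyEither β E]

theorem weightedComp_toLp_toLp (w : C(α, 𝕜)) {φ : C(α, β)} (hφ : MeasurePreserving φ μ ν)
    (f : C(β, E)) :
    weightedComp (w.toLp ∞ μ 𝕜) hφ (f.toLp p ν 𝕜) = (w • f.comp φ).toLp p μ 𝕜 := by
  ext1
  filter_upwards [coeFn_weightedComp_toLp w hφ (f.toLp p ν 𝕜),
    hφ.quasiMeasurePreserving.ae (f.coeFn_toLp (p := p) (𝕜 := 𝕜) ν),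
    (w • f.comp φ).coeFn_toLp (p := p) (𝕜 := 𝕜) μ] with x hcomp hf hright
  rw [hcomp, hf, hright]
  rfl

end WeightedComposition

theorem apply_single_eq_single_smul {G α E : Type*} {p : ℝ≥0∞} [Group G] [MulAction G α]
    [DecidableEq α] [NormedAddCommGroup E] {g : G}
    {T : lp (fun _ : α => E) p → lp (fun _ : α => E) p}
    (hT : ∀ f i, T f i = f (g⁻¹ • i)) (i : α) (c : E) :
    T (lp.single p i c) = lp.single p (g • i) c := by
  ext j
  simp only [hT, lp.single_apply, Pi.single_apply, inv_smul_eq_iff]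

theorem measurePreserving_mul_comp_prod {G H : Type*} [Group G] [MeasurableSpace G]
    [MeasurableMul₂ G] [MeasurableSpace H] (μ : Measure G) (ν : Measure H) [SFinite μ] [SFinite ν]
    [μ.IsMulRightInvariant] {f : H → G} (hf : Measurable f) :
    MeasurePreserving (fun p : G × H => (p.1 * f p.2, p.2)) (μ.prod ν) (μ.prod ν) := by
  have hswapped : MeasurePreserving (fun p : H × G => (p.1, p.2 * f p.1))
      (ν.prod μ) (ν.prod μ) :=
    (MeasurePreserving.id ν).skew_product (g := fun y x => x * f y) (by fun_prop)
      (.of_forall fun y => map_mul_right_eq_self μ (f y))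
  exact Measure.measurePreserving_swap.comp (hswapped.comp Measure.measurePreserving_swap)

instance : circleHaar.IsHaarMeasure := inferInstanceAs (Measure.haar : Measure Circle).IsHaarMeasure

instance : IsFiniteMeasure torus2Haar :=
  inferInstanceAs (IsFiniteMeasure (circleHaar.prod circleHaar))

/-- The shear `(z, w) ↦ (z wᵐ, w)` of the torus `𝕋²`. -/
noncomputable def torusShear (m : ℤ) : C(Circle × Circle, Circle × Circle) where
  toFun p := (p.1 * p.2 ^ m, p.2)

theorem measurePreserving_torusShear (m : ℤ) :
    MeasurePreserving (torusShear m) torus2Haar torus2Haar :=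
  measurePreserving_mul_comp_prod circleHaar circleHaar (measurable_id.pow_const m)

/-- The character `(z, w) ↦ zⁿ wᵏ` of the torus `𝕋²` indexed by `(n, k) ∈ ℤ²`. -/
noncomputable def torusChar (s : ℤ × ℤ) : C(Circle × Circle, ℂ) where
  toFun p := ((p.1 ^ s.1 * p.2 ^ s.2 : Circle) : ℂ)
  continuous_toFun := continuous_subtype_val.comp (by fun_prop)

theorem torusChar_apply (s : ℤ × ℤ) (p : Circle × Circle) :
    torusChar s p = (p.1 : ℂ) ^ s.1 * (p.2 : ℂ) ^ s.2 := by
  simp [torusChar]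

theorem apply_single_one_eq_toLp_torusChar
    {F : lp (fun _ : ℤ × ℤ => ℂ) 2 → Lp ℂ 2 torus2Haar}
    (hF : ∀ f : lp (fun _ : ℤ × ℤ => ℂ) 2, Summable (fun s => f s) →
      F f =ᵐ[torus2Haar] fun p => ∑' s : ℤ × ℤ, f s * (p.1 : ℂ) ^ s.1 * (p.2 : ℂ) ^ s.2)
    (s : ℤ × ℤ) :
    F (lp.single 2 s 1) = (torusChar s).toLp 2 torus2Haar ℂ := by
  have hzero (t : ℤ × ℤ) (ht : t ≠ s) : lp.single (E := fun _ => ℂ) 2 s 1 t = 0 :=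
    lp.single_apply_ne 2 s 1 ht
  have hsummable : Summable fun t => lp.single (E := fun _ => ℂ) 2 s 1 t :=
    (hasSum_single s hzero).summable
  ext1
  filter_upwards [hF _ hsummable,
    (torusChar s).coeFn_toLp (p := 2) (𝕜 := ℂ) torus2Haar] with p hp hchar
  rw [hp, hchar, torusChar_apply, tsum_eq_single s fun t ht => by simp only [hzero t ht, zero_mul],
    lp.single_apply_self, one_mul]

namespace Heis

/-- The action of `ℋ₁` on `ℤ²` by affine shears; `U` is the associated permutation representation
`U_g f = f (g⁻¹ • ·)`. -/
instance : SMul Heis (ℤ × ℤ) := ⟨fun g s => (s.1 + g.y, s.2 + g.z + g.x * s.1)⟩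

theorem smul_def (g : Heis) (s : ℤ × ℤ) : g • s = (s.1 + g.y, s.2 + g.z + g.x * s.1) := rfl

instance : MulAction Heis (ℤ × ℤ) where
  one_smul s := by ext <;> simp [smul_def, one_def]
  mul_smul a b s := by ext <;> simp only [smul_def, mul_def] <;> ring

theorem inv_smul_def (g : Heis) (s : ℤ × ℤ) :
    g⁻¹ • s = (s.1 - g.y, s.2 - g.z - g.x * (s.1 - g.y)) := by
  rw [smul_def, inv_def]
  ext <;> ring

theorem torusChar_smul_apply (g : Heis) (s : ℤ × ℤ) (p : Circle × Circle) :
    torusChar (g • s) p = torusChar (g.y, g.z) p * torusChar s (torusShear g.x p) := by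
  have hz : (p.1 : ℂ) ≠ 0 := p.1.coe_ne_zero
  have hw : (p.2 : ℂ) ≠ 0 := p.2.coe_ne_zero
  simp only [torusChar_apply, torusShear, ContinuousMap.coe_mk, smul_def, Circle.coe_mul,
    Circle.coe_zpow, mul_zpow, zpow_add₀ hz, zpow_add₀ hw, zpow_mul]
  ring

/-- The operator `h ↦ z^{n'} w^{k'} h(z w^{m'}, w)` on `L²(𝕋²)` attached to `g = (m', n', k')`. -/
noncomputable def torusRep (g : Heis) : Lp ℂ 2 torus2Haar →L[ℂ] Lp ℂ 2 torus2Haar :=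
  weightedComp ((torusChar (g.y, g.z)).toLp ∞ torus2Haar ℂ) (measurePreserving_torusShear g.x)

theorem torusRep_toLp_torusChar (g : Heis) (s : ℤ × ℤ) :
    torusRep g ((torusChar s).toLp 2 torus2Haar ℂ) =
      (torusChar (g • s)).toLp 2 torus2Haar ℂ := by
  rw [torusRep, weightedComp_toLp_toLp]
  congr 1
  ext p
  exact (torusChar_smul_apply g s p).symm

theorem coeFn_torusRep (g : Heis) (h : Lp ℂ 2 torus2Haar) :
    torusRep g h =ᵐ[torus2Haar]
      fun p => h (p.1 * p.2 ^ g.x, p.2) * (p.1 : ℂ) ^ g.y * (p.2 : ℂ) ^ g.z := by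
  filter_upwards [coeFn_weightedComp_toLp (torusChar (g.y, g.z))
    (measurePreserving_torusShear g.x) h] with p hp
  rw [torusRep, hp, torusChar_apply, smul_eq_mul, mul_comm, ← mul_assoc]
  rfl

end Heis

/-- Let `ℱ⁻¹ : ℓ²(ℤ²) → L²(𝕋²)` be the inverse Fourier transform
`ℱ⁻¹f(z, w) = Σ_{n,k} f(n, k) zⁿ wᵏ` and `ℱ` its inverse.  For `g = (m', n', k') ∈ ℋ₁` and
the unitary representation `U_g f(n, k) = f(n − n', k − k' − m'·(n − n'))` on `ℓ²(ℤ²)`, the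
conjugated operator satisfies `(ℱ⁻¹ ∘ U_g ∘ ℱ) h(z, w) = h(z·w^{m'}, w) · z^{n'} · w^{k'}`
for all `h ∈ L²(𝕋²)` and almost every `(z, w) ∈ 𝕋²`. -/
theorem Heis.fourier_conjugated_representation
    (Finv : lp (fun _ : ℤ × ℤ => ℂ) 2 ≃ₗᵢ[ℂ] Lp ℂ 2 torus2Haar)
    (hFinv : ∀ f : lp (fun _ : ℤ × ℤ => ℂ) 2,
      Summable (fun s : ℤ × ℤ => f s) →
      (Finv f : Circle × Circle → ℂ) =ᵐ[torus2Haar]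
        fun p => ∑' s : ℤ × ℤ, f s * (p.1 : ℂ) ^ s.1 * (p.2 : ℂ) ^ s.2)
    (U : Heis → (lp (fun _ : ℤ × ℤ => ℂ) 2 ≃ₗᵢ[ℂ] lp (fun _ : ℤ × ℤ => ℂ) 2))
    (hU : ∀ (g : Heis) (f : lp (fun _ : ℤ × ℤ => ℂ) 2) (n k : ℤ),
      U g f (n, k) = f (n - g.y, k - g.z - g.x * (n - g.y)))
    (g : Heis) (h : Lp ℂ 2 torus2Haar) :
    (Finv (U g (Finv.symm h)) : Circle × Circle → ℂ) =ᵐ[torus2Haar]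
      fun p => h (p.1 * p.2 ^ g.x, p.2) * (p.1 : ℂ) ^ g.y * (p.2 : ℂ) ^ g.z := by
  have hsingle := apply_single_one_eq_toLp_torusChar hFinv
  have hU_smul (f : lp (fun _ : ℤ × ℤ => ℂ) 2) (s : ℤ × ℤ) : U g f s = f (g⁻¹ • s) := by
    rw [inv_smul_def, hU]
  have hintertwine : ((U g).trans Finv : lp (fun _ : ℤ × ℤ => ℂ) 2 →L[ℂ] Lp ℂ 2 torus2Haar) =
      torusRep g ∘L (Finv : lp (fun _ : ℤ × ℤ => ℂ) 2 →L[ℂ] Lp ℂ 2 torus2Haar) := by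
    refine lp.ext_continuousLinearMap ENNReal.ofNat_ne_top fun s =>
      ContinuousLinearMap.ext_ring ?_
    calc Finv (U g (lp.single 2 s 1))
        = Finv (lp.single 2 (g • s) 1) := by rw [apply_single_eq_single_smul hU_smul]
      _ = (torusChar (g • s)).toLp 2 torus2Haar ℂ := hsingle (g • s)
      _ = torusRep g ((torusChar s).toLp 2 torus2Haar ℂ) := (torusRep_toLp_torusChar g s).symm
      _ = torusRep g (Finv (lp.single 2 s 1)) := by rw [hsingle]
  have hconj : Finv (U g (Finv.symm h)) = torusRep g h := by
    simpa using DFunLike.congr_fun hintertwine (Finv.symm h)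
  rw [hconj]
  exact coeFn_torusRep g h
end

section
/- Fix an integer p ≥ 1, real numbers ξ, η, α, and integers m, k, s. Let T be the linear operator on ℂ^p (with standard basis ε₀, …, ε_{p−1}) defined by T ε_j = exp(2πi(mξ + (k + j·m)η + ⌊(s + j)/p⌋·α)) · ε_{(j−s) mod p}. Then: (i) if p does not divide s, the trace of T is 0; (ii) if p divides s and m·η ∈ ℤ, the trace of T equals p · exp(2πi(mξ + kη + (s/p)·α)). -/
/-!
The map `j ↦ (j - s) mod p` has a fixed point exactly when `p ∣ s`, and then it is the identity.
So `T` has zero diagonal if `p ∤ s`. If `p ∣ s`, the floor `⌊(s + j) / p⌋` equals `s / p` for every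
`j`, and the diagonal entries of `T` form a geometric progression of ratio `exp (2πi m η)`, which
is `1` when `m η ∈ ℤ`.
-/

theorem eq_sub_emod_iff_dvd {n a : ℤ} (s : ℤ) (ha₀ : 0 ≤ a) (ha : a < n) :
    a = (a - s) % n ↔ n ∣ s := by
  have a_mod : a % n = a := Int.emod_eq_of_lt ha₀ ha
  calc a = (a - s) % n ↔ a ≡ a - s [ZMOD n] := by rw [Int.ModEq, a_mod]
    _ ↔ n ∣ s := by rw [Int.modEq_iff_dvd, sub_sub_cancel_left, dvd_neg]

theorem add_ediv_of_dvd_of_lt {n s a : ℤ} (hs : n ∣ s) (ha₀ : 0 ≤ a) (ha : a < n) :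
    (s + a) / n = s / n := by
  rw [Int.add_ediv_of_dvd_left hs, Int.ediv_eq_zero_of_lt ha₀ ha, add_zero]

theorem exp_two_pi_I_mul_add_nat_mul (x θ : ℂ) (n : ℕ) :
    Complex.exp (2 * Real.pi * Complex.I * (x + n * θ)) =
      Complex.exp (2 * Real.pi * Complex.I * x) *
        Complex.exp (2 * Real.pi * Complex.I * θ) ^ n := by
  rw [← Complex.exp_nat_mul, ← Complex.exp_add]
  ring_nf

section WeightedCyclicShift

variable {R : Type*} {p : ℕ}

/-- The weighted cyclic shift `ε_j ↦ c_j ε_{(j - s) mod p}`, as the matrix acting on column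
vectors; the indices are compared in `ℤ` because `s` may be negative. -/
def weightedCyclicShift [Zero R] (s : ℤ) (c : Fin p → R) : Matrix (Fin p) (Fin p) R :=
  Matrix.of fun i j ↦ if ((i : ℕ) : ℤ) = (((j : ℕ) : ℤ) - s) % (p : ℤ) then c j else 0

theorem weightedCyclicShift_apply_self [Zero R] (s : ℤ) (c : Fin p → R) (j : Fin p) :
    weightedCyclicShift s c j j = if (p : ℤ) ∣ s then c j else 0 := by
  have fixed_iff := eq_sub_emod_iff_dvd (n := p) (a := (j : ℕ)) s (by positivity) (mod_cast j.isLt)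
  simp only [weightedCyclicShift, Matrix.of_apply, fixed_iff]

theorem trace_weightedCyclicShift_of_not_dvd [AddCommMonoid R] {s : ℤ} (hs : ¬ (p : ℤ) ∣ s)
    (c : Fin p → R) : (weightedCyclicShift s c).trace = 0 := by
  simp only [Matrix.trace, Matrix.diag_apply, weightedCyclicShift_apply_self, if_neg hs,
    Finset.sum_const_zero]

theorem trace_weightedCyclicShift_of_dvd [AddCommMonoid R] {s : ℤ} (hs : (p : ℤ) ∣ s)
    (c : Fin p → R) : (weightedCyclicShift s c).trace = ∑ j, c j := by
  simp only [Matrix.trace, Matrix.diag_apply, weightedCyclicShift_apply_self, if_pos hs]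

end WeightedCyclicShift

theorem trace_of_heisenberg_representation_operator_general
    (p : ℕ) (ξ η α : ℂ) (m k s : ℤ)
    (c : Fin p → ℂ)
    (hc : ∀ j : Fin p, c j =
      Complex.exp (2 * Real.pi * Complex.I *
        ((m : ℂ) * ξ + ((k : ℂ) + ((j : ℕ) : ℂ) * (m : ℂ)) * η +
          ((⌊((s + ((j : ℕ) : ℤ) : ℤ) : ℝ) / (p : ℝ)⌋ : ℤ) : ℂ) * α)))
    (T : Matrix (Fin p) (Fin p) ℂ)
    (hT : ∀ i j : Fin p, T i j =
      if ((i : ℕ) : ℤ) = (((j : ℕ) : ℤ) - s) % (p : ℤ) then c j else 0) :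
    (¬ (p : ℤ) ∣ s → T.trace = 0) ∧
    ((p : ℤ) ∣ s →
      T.trace = (∑ j ∈ Finset.range p, Complex.exp (2 * Real.pi * Complex.I * (m * η)) ^ j) *
        Complex.exp (2 * Real.pi * Complex.I *
          ((m : ℂ) * ξ + (k : ℂ) * η + ((s / (p : ℤ) : ℤ) : ℂ) * α))) := by
  obtain rfl : T = weightedCyclicShift s c := Matrix.ext hT
  refine ⟨fun hs ↦ trace_weightedCyclicShift_of_not_dvd hs c, fun hs ↦ ?_⟩
  rw [trace_weightedCyclicShift_of_dvd hs, Finset.sum_range, Finset.sum_mul]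
  refine Finset.sum_congr rfl fun j _ ↦ ?_
  have floor_eq : ⌊((s + ((j : ℕ) : ℤ) : ℤ) : ℝ) / (p : ℝ)⌋ = s / (p : ℤ) := by
    rw [Int.floor_div_natCast, Int.floor_intCast,
      add_ediv_of_dvd_of_lt hs (by positivity) (mod_cast j.isLt)]
  rw [hc, floor_eq, mul_comm (_ ^ _), ← exp_two_pi_I_mul_add_nat_mul]
  ring_nf

/-- Fix an integer `p ≥ 1`, real numbers `ξ, η, α`, and integers `m, k, s`.  Let `T` be the
linear operator on `ℂᵖ` (with standard basis `ε₀, …, ε_{p−1}`) defined by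
`T ε_j = exp(2πi(mξ + (k + j·m)η + ⌊(s + j)/p⌋·α)) · ε_{(j−s) mod p}`, i.e. the matrix whose
`(i, j)` entry is the above exponential factor if `i = (j − s) mod p` and `0` otherwise.
Then: (i) if `p` does not divide `s`, the trace of `T` is `0`; (ii) if `p` divides `s` and
`m·η ∈ ℤ`, the trace of `T` equals `p · exp(2πi(mξ + kη + (s/p)·α))`. -/
theorem trace_of_heisenberg_representation_operator
    (p : ℕ) (hp : 1 ≤ p) (ξ η α : ℝ) (m k s : ℤ)
    (c : Fin p → ℂ)
    (hc : ∀ j : Fin p, c j =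
      Complex.exp (2 * Real.pi * Complex.I *
        ((m : ℂ) * (ξ : ℂ) + ((k : ℂ) + ((j : ℕ) : ℂ) * (m : ℂ)) * (η : ℂ) +
          ((⌊((s + ((j : ℕ) : ℤ) : ℤ) : ℝ) / (p : ℝ)⌋ : ℤ) : ℂ) * (α : ℂ))))
    (T : Matrix (Fin p) (Fin p) ℂ)
    (hT : ∀ i j : Fin p, T i j =
      if ((i : ℕ) : ℤ) = (((j : ℕ) : ℤ) - s) % (p : ℤ) then c j else 0) :
    (¬ (p : ℤ) ∣ s → T.trace = 0) ∧
    ((p : ℤ) ∣ s → (∃ l : ℤ, (m : ℝ) * η = (l : ℝ)) →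
      T.trace = (p : ℂ) * Complex.exp (2 * Real.pi * Complex.I *
        ((m : ℂ) * (ξ : ℂ) + (k : ℂ) * (η : ℂ) + ((s / (p : ℤ) : ℤ) : ℂ) * (α : ℂ)))) := by
  obtain ⟨trace_eq_zero, trace_eq⟩ :=
    trace_of_heisenberg_representation_operator_general p ξ η α m k s c hc T hT
  refine ⟨trace_eq_zero, fun hs ⟨l, hl⟩ ↦ ?_⟩
  have ratio_eq_one : Complex.exp (2 * Real.pi * Complex.I * (m * η)) = 1 :=
    Complex.exp_eq_one_iff.mpr ⟨l, by rw [mul_comm]; congr 1; exact_mod_cast hl⟩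
  simp only [trace_eq hs, ratio_eq_one, one_pow, Finset.sum_const, Finset.card_range,
    nsmul_eq_mul, mul_one]
end

section
/- Let ℋ₁ be the discrete Heisenberg group and let ℤ be the trivial ℋ₁-module. The group cohomology of ℋ₁ with coefficients in ℤ satisfies: H⁰(ℋ₁, ℤ) ≅ ℤ, H¹(ℋ₁, ℤ) ≅ ℤ², H²(ℋ₁, ℤ) ≅ ℤ², H³(ℋ₁, ℤ) ≅ ℤ, and Hᵏ(ℋ₁, ℤ) = 0 for all k ≥ 4. -/
open CategoryTheory

/-!
Functions `G → M` under right translation are coinduced from the trivial subgroup, hence acyclic,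
with `H⁰ ≅ M`. Left translations by the generators `(1, 0, 0)`, `(0, 1, 0)`, `(0, 0, 1)` of `ℋ₁`
are symmetries `a`, `b`, `c` of this representation, where `c` is central and `b a = c a b`. They
give the discrete analogue of the Rumin complex, `Fun(M) → Fun(M²) → Fun(M²) → Fun(M)`, with
`d₀ = (a - 1, b - 1)`, with `d₂` the first-order operator such that `d₂ d₀ = c - 1`, and with the
second-order operator `d₁ = d₀ d₂ - (c - 1)`. Inverting `c - 1` by summation along the centre
reduces exactness to functions on `ℤ²`, so this is an acyclic resolution of the constants. All its
differentials vanish on invariants, so `Hⁿ(ℋ₁, M)` is `H⁰` of the `n`-th term.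
-/

section AcyclicResolution

open Limits

universe u

variable {k G : Type u} [CommRing k] [Group G]

theorem rep_exact_of_function_exact (S : ShortComplex (Rep.{u} k G))
    (hS : Function.Exact S.f.hom S.g.hom) : S.Exact := by
  apply (forget₂ (Rep.{u} k G) (ModuleCat.{u} k)).reflects_exact_of_faithful
  rw [ShortComplex.moduleCat_exact_iff]
  exact fun v hv => (hS v).1 hv

theorem groupCohomology_map_zero_eq_zero_of_invariants {A B : Rep.{u} k G} (f : A ⟶ B)
    (hf : ∀ v ∈ A.ρ.invariants, f.hom v = 0) :
    groupCohomology.map (MonoidHom.id G) f 0 = 0 := by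
  have hinv : (Rep.invariantsFunctor k G).map f = 0 := by
    ext v
    exact Subtype.ext (hf v.1 v.2)
  rw [← cancel_mono (groupCohomology.H0Iso B).hom, groupCohomology.map_id_comp_H0Iso_hom,
    hinv, comp_zero, zero_comp]

theorem kernelLift_shortExact {C : Type*} [Category* C] [Abelian C] (S : ShortComplex C)
    (hS : S.Exact) :
    (ShortComplex.mk (kernel.ι S.f) (kernel.lift S.g S.f S.zero)
      (by simp [← cancel_mono (kernel.ι S.g)])).ShortExact where
  exact := ShortComplex.exact_of_f_is_kernel _ <|
    isKernelOfComp (kernel.ι S.g) S.f (kernelIsKernel S.f) _ (kernel.lift_ι _ _ _)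
  mono_f := by dsimp only; infer_instance
  epi_g := hS.epi_kernelLift

variable {S : ShortComplex (Rep.{u} k G)}

theorem groupCohomology_map_kernelLift_zero_eq_zero
    (hzero : groupCohomology.map (MonoidHom.id G) S.f 0 = 0) :
    groupCohomology.map (MonoidHom.id G) (kernel.lift S.g S.f S.zero) 0 = 0 := by
  have := groupCohomology.mono_map_0_of_mono (kernel.ι S.g)
  rw [← cancel_mono (groupCohomology.map (MonoidHom.id G) (kernel.ι S.g) 0),
    ← groupCohomology.map_id_comp, kernel.lift_ι, hzero, zero_comp]

theorem groupCohomology_kernel_zero_iso (hS : S.Exact)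
    (hzero : groupCohomology.map (MonoidHom.id G) S.f 0 = 0) :
    Nonempty (groupCohomology (kernel S.f) 0 ≅ groupCohomology S.X₁ 0) := by
  have : Mono (groupCohomology.map (MonoidHom.id G) (kernel.ι S.f) 0) :=
    groupCohomology.mono_map_0_of_mono _
  have : Epi (groupCohomology.map (MonoidHom.id G) (kernel.ι S.f) 0) :=
    (groupCohomology.mapShortComplex₂_exact (kernelLift_shortExact S hS) 0).epi_f
      (groupCohomology_map_kernelLift_zero_eq_zero hzero)
  have := isIso_of_mono_of_epi (groupCohomology.map (MonoidHom.id G) (kernel.ι S.f) 0)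
  exact ⟨asIso (groupCohomology.map (MonoidHom.id G) (kernel.ι S.f) 0)⟩

theorem groupCohomology_kernel_succ_iso (hS : S.Exact)
    (hacyclic : ∀ n, IsZero (groupCohomology S.X₁ (n + 1)))
    (hzero : groupCohomology.map (MonoidHom.id G) S.f 0 = 0) (n : ℕ) :
    Nonempty (groupCohomology (kernel S.f) (n + 1) ≅ groupCohomology (kernel S.g) n) := by
  have hX := kernelLift_shortExact S hS
  have hmap : groupCohomology.map (MonoidHom.id G) (kernel.lift S.g S.f S.zero) n = 0 := by
    cases n with
    | zero => exact groupCohomology_map_kernelLift_zero_eq_zero hzero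
    | succ n => exact (hacyclic n).eq_zero_of_src _
  have : Epi (groupCohomology.δ hX n (n + 1) rfl) :=
    groupCohomology.epi_δ_of_isZero hX n (hacyclic n)
  have : Mono (groupCohomology.δ hX n (n + 1) rfl) :=
    (groupCohomology.mapShortComplex₃_exact hX rfl).mono_g hmap
  have := isIso_of_mono_of_epi (groupCohomology.δ hX n (n + 1) rfl)
  exact ⟨(asIso (groupCohomology.δ hX n (n + 1) rfl)).symm⟩

theorem groupCohomology_kernel_iso_of_acyclic_resolution (n : ℕ) (I : ℕ → Rep.{u} k G)
    (d : ∀ n, I n ⟶ I (n + 1)) (w : ∀ n, d n ≫ d (n + 1) = 0)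
    (hexact : ∀ n, (ShortComplex.mk (d n) (d (n + 1)) (w n)).Exact)
    (hacyclic : ∀ n m, IsZero (groupCohomology (I n) (m + 1)))
    (hzero : ∀ n, groupCohomology.map (MonoidHom.id G) (d n) 0 = 0) :
    Nonempty (groupCohomology (kernel (d 0)) n ≅ groupCohomology (I n) 0) := by
  induction n generalizing I with
  | zero => exact groupCohomology_kernel_zero_iso (hexact 0) (hzero 0)
  | succ n ih =>
    obtain ⟨e⟩ := groupCohomology_kernel_succ_iso (hexact 0) (hacyclic 0) (hzero 0) n
    obtain ⟨e'⟩ := ih (fun n => I (n + 1)) (fun n => d (n + 1)) (fun n => w (n + 1))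
      (fun n => hexact (n + 1)) (fun n => hacyclic (n + 1)) (fun n => hzero (n + 1))
    exact ⟨e ≪≫ e'⟩

end AcyclicResolution

/-- Endomorphisms `a`, `b`, `c` of a representation satisfying the relations of the discrete
Heisenberg group: `c` is central and `b a = c a b`. Invertibility is not required. -/
structure HeisenbergTriple {k G V : Type*} [Semiring k] [Monoid G] [AddCommGroup V] [Module k V]
    (ρ : Representation k G V) where
  a : ρ.IntertwiningMap ρ
  b : ρ.IntertwiningMap ρ
  c : ρ.IntertwiningMap ρ
  b_a (v : V) : b (a v) = c (a (b v))
  a_c (v : V) : a (c v) = c (a v)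
  b_c (v : V) : b (c v) = c (b v)

namespace HeisenbergTriple

section Complex

variable {k G V : Type*} [Semiring k] [Monoid G] [AddCommGroup V] [Module k V]
  {ρ : Representation k G V} (T : HeisenbergTriple ρ)

/-- The degree `0` differential `v ↦ (a v - v, b v - v)` of the discrete Rumin complex
`ρ → ρ² → ρ² → ρ`. -/
noncomputable def d₀ : ρ.IntertwiningMap (ρ.prod ρ) :=
  .prod (T.a - .id ρ) (T.b - .id ρ)

/-- The degree `2` differential `(p, q) ↦ (b - c) p + (1 - c a) q` of the discrete Rumin complex,
chosen so that `d₂ ∘ d₀ = c - 1`. -/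
noncomputable def d₂ : (ρ.prod ρ).IntertwiningMap ρ :=
  (T.b - T.c).comp (.fst k ρ ρ) + (.id ρ - T.c.comp T.a).comp (.snd k ρ ρ)

/-- The degree `1` differential of the discrete Rumin complex: the second-order operator
`d₀ ∘ d₂ - (c - 1)`. -/
noncomputable def d₁ : (ρ.prod ρ).IntertwiningMap (ρ.prod ρ) :=
  T.d₀.comp T.d₂ -
    .prod ((T.c - .id ρ).comp (.fst k ρ ρ)) ((T.c - .id ρ).comp (.snd k ρ ρ))

theorem d₀_apply (v : V) : T.d₀ v = (T.a v - v, T.b v - v) := rfl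

theorem d₂_apply (F : V × V) :
    T.d₂ F = (T.b F.1 - T.c F.1) + (F.2 - T.c (T.a F.2)) := rfl

theorem d₁_apply (F : V × V) :
    T.d₁ F = T.d₀ (T.d₂ F) - (T.c F.1 - F.1, T.c F.2 - F.2) := rfl

theorem d₂_d₀ (v : V) : T.d₂ (T.d₀ v) = T.c v - v := by
  simp only [d₂_apply, d₀_apply, map_sub, T.b_a]
  abel

theorem d₁_d₀ (v : V) : T.d₁ (T.d₀ v) = 0 := by
  rw [d₁_apply, d₂_d₀, d₀_apply, d₀_apply]
  simp only [map_sub, T.a_c, T.b_c, Prod.mk_sub_mk, Prod.mk_eq_zero]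
  constructor <;> abel

theorem d₂_d₁ (F : V × V) : T.d₂ (T.d₁ F) = 0 := by
  rw [d₁_apply, map_sub, d₂_d₀]
  simp only [d₂_apply, map_sub, map_add, T.a_c, T.b_c]
  abel

/-- Integrability of a Heisenberg triple: the difference operators `c - 1`, `b - 1` and `a - 1`
are successively surjective on the common kernels of the preceding ones. -/
structure IsIntegrable : Prop where
  c_sub_one (v : V) : ∃ w, T.c w - w = v
  b_sub_one (v : V) (hc : T.c v = v) : ∃ w, T.c w = w ∧ T.b w - w = v
  a_sub_one (v : V) (hc : T.c v = v) (hb : T.b v = v) :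
    ∃ w, T.c w = w ∧ T.b w = w ∧ T.a w - w = v

variable {T}

theorem IsIntegrable.exists_d₀_eq (hT : T.IsIntegrable) (F : V × V)
    (hc : T.c F.1 = F.1 ∧ T.c F.2 = F.2) (hF : T.d₂ F = 0) : ∃ v, T.d₀ v = F := by
  obtain ⟨p, q⟩ := F
  obtain ⟨hp, hq⟩ : T.c p = p ∧ T.c q = q := hc
  have hclosed : T.b p - p = T.a q - q := by
    rw [d₂_apply, ← T.a_c, hp, hq] at hF
    rw [← sub_eq_zero, ← hF]
    abel
  obtain ⟨f, hcf, hbf⟩ := hT.b_sub_one q hq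
  have hfixed_c : T.c (p - (T.a f - f)) = p - (T.a f - f) := by
    simp only [map_sub, ← T.a_c, hcf, hp]
  have hfixed_b : T.b (p - (T.a f - f)) = p - (T.a f - f) := by
    have hbaf : T.b (T.a f) - T.a f = T.a q := by
      rw [T.b_a, ← T.a_c, ← T.b_c, hcf, ← map_sub, hbf]
    rw [← sub_eq_zero]
    calc T.b (p - (T.a f - f)) - (p - (T.a f - f))
      _ = (T.b p - p) - (T.b (T.a f) - T.a f) + (T.b f - f) := by
        simp only [map_sub]
        abel
      _ = 0 := by
        rw [hclosed, hbaf, hbf]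
        abel
  obtain ⟨g, -, hbg, hag⟩ := hT.a_sub_one _ hfixed_c hfixed_b
  refine ⟨f + g, ?_⟩
  rw [d₀_apply, map_add, map_add, Prod.mk.injEq]
  constructor
  · rw [add_sub_add_comm, hag, add_sub_cancel]
  · rw [hbg, ← hbf]
    abel

theorem IsIntegrable.exact_d₀_d₁ (hT : T.IsIntegrable) : Function.Exact T.d₀ T.d₁ := by
  refine fun F => ⟨fun hF => ?_, ?_⟩
  · obtain ⟨f, hf⟩ := hT.c_sub_one (T.d₂ F)
    have hclosed : T.d₂ (F - T.d₀ f) = 0 := by rw [map_sub, d₂_d₀, hf, sub_self]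
    have hfixed : T.d₁ (F - T.d₀ f) = 0 := by rw [map_sub, d₁_d₀, hF, sub_zero]
    rw [d₁_apply, hclosed, map_zero, zero_sub, neg_eq_zero, Prod.mk_eq_zero, sub_eq_zero,
      sub_eq_zero] at hfixed
    obtain ⟨g, hg⟩ := hT.exists_d₀_eq _ hfixed hclosed
    exact ⟨f + g, by rw [map_add, hg, add_sub_cancel]⟩
  · rintro ⟨v, rfl⟩
    exact T.d₁_d₀ v

theorem IsIntegrable.exact_d₁_d₂ (hT : T.IsIntegrable) : Function.Exact T.d₁ T.d₂ := by
  refine fun F => ⟨fun hF => ?_, ?_⟩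
  · obtain ⟨p, hp⟩ := hT.c_sub_one (-F.1)
    obtain ⟨q, hq⟩ := hT.c_sub_one (-F.2)
    have hfixed : T.c (T.d₂ (p, q)) = T.d₂ (p, q) := by
      have : T.c (T.d₂ (p, q)) - T.d₂ (p, q) = T.d₂ (T.c p - p, T.c q - q) := by
        simp only [d₂_apply, map_sub, map_add, T.a_c, T.b_c]
        abel
      rw [← sub_eq_zero, this, hp, hq]
      exact (map_neg T.d₂ F).trans (by rw [hF, neg_zero])
    obtain ⟨w, hcw, hbw⟩ := hT.b_sub_one _ hfixed
    have hd₂ : T.d₂ (p - w, q) = 0 := by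
      have hw : T.d₂ (w, 0) = T.d₂ (p, q) := by
        rw [d₂_apply, hcw, hbw, map_zero, map_zero, sub_zero, add_zero]
      rw [show (p - w, q) = (p, q) - (w, 0) by simp, map_sub, hw, sub_self]
    refine ⟨(p - w, q), ?_⟩
    rw [d₁_apply, hd₂, map_zero, zero_sub, map_sub, hcw, sub_sub_sub_cancel_right, hp, hq]
    exact neg_neg F
  · rintro ⟨v, rfl⟩
    exact T.d₂_d₁ v

theorem IsIntegrable.d₂_surjective (hT : T.IsIntegrable) : Function.Surjective T.d₂ := fun v =>
  let ⟨w, hw⟩ := hT.c_sub_one v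
  ⟨T.d₀ w, (T.d₂_d₀ w).trans hw⟩

end Complex

section Cohomology

open Limits

universe u

variable {k G V : Type u} [CommRing k] [Group G] [AddCommGroup V] [Module k V]
  {ρ : Representation k G V} (T : HeisenbergTriple ρ)

variable (ρ) in
/-- The terms `ρ`, `ρ²`, `ρ²`, `ρ` of the discrete Rumin complex, extended by zero. -/
noncomputable def ruminTerm : ℕ → Rep.{u} k G
  | 0 => Rep.of ρ
  | 1 => Rep.of (ρ.prod ρ)
  | 2 => Rep.of (ρ.prod ρ)
  | 3 => Rep.of ρ
  | _ + 4 => Rep.trivial k G PUnit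

/-- The differentials `d₀`, `d₁`, `d₂` of the discrete Rumin complex, extended by zero. -/
noncomputable def ruminD : ∀ n, ruminTerm ρ n ⟶ ruminTerm ρ (n + 1)
  | 0 => Rep.ofHom T.d₀
  | 1 => Rep.ofHom T.d₁
  | 2 => Rep.ofHom T.d₂
  | _ + 3 => 0

theorem ruminD_comp : ∀ n, T.ruminD n ≫ T.ruminD (n + 1) = 0
  | 0 => Rep.hom_ext <| Representation.IntertwiningMap.ext <| LinearMap.ext T.d₁_d₀
  | 1 => Rep.hom_ext <| Representation.IntertwiningMap.ext <| LinearMap.ext T.d₂_d₁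
  | _ + 2 => comp_zero

variable {T}

theorem IsIntegrable.ruminD_exact (hT : T.IsIntegrable) :
    ∀ n, (ShortComplex.mk _ _ (T.ruminD_comp n)).Exact
  | 0 => rep_exact_of_function_exact _ hT.exact_d₀_d₁
  | 1 => rep_exact_of_function_exact _ hT.exact_d₁_d₂
  | 2 => rep_exact_of_function_exact (.mk (Rep.ofHom T.d₂) (0 : Rep.of ρ ⟶ _) comp_zero)
      fun v => ⟨fun _ => hT.d₂_surjective v, fun _ => rfl⟩
  | _ + 3 => ShortComplex.exact_of_isZero_X₂ _ <|
      (Rep.isZero_iff _ _ (Rep.trivial k G PUnit)).2 inferInstance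

theorem isZero_groupCohomology_ruminTerm_add_four (n m : ℕ) :
    IsZero (groupCohomology (ruminTerm ρ (n + 4)) m) :=
  (groupCohomology.functor k G m).map_isZero <|
    (Rep.isZero_iff _ _ (Rep.trivial k G PUnit)).2 inferInstance

theorem isZero_groupCohomology_ruminTerm
    (hρ : ∀ m, IsZero (groupCohomology (Rep.of ρ) (m + 1)))
    (hρρ : ∀ m, IsZero (groupCohomology (Rep.of (ρ.prod ρ)) (m + 1))) :
    ∀ n m, IsZero (groupCohomology (ruminTerm ρ n) (m + 1))
  | 0, m => hρ m
  | 1, m => hρρ m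
  | 2, m => hρρ m
  | 3, m => hρ m
  | n + 4, m => isZero_groupCohomology_ruminTerm_add_four n (m + 1)

theorem d₀_eq_zero {v : V} (ha : T.a v = v) (hb : T.b v = v) : T.d₀ v = 0 := by
  rw [d₀_apply, ha, hb, sub_self, Prod.mk_zero_zero]

theorem d₂_eq_zero {F : V × V} (h₁ : T.b F.1 = F.1 ∧ T.c F.1 = F.1)
    (h₂ : T.a F.2 = F.2 ∧ T.c F.2 = F.2) : T.d₂ F = 0 := by
  rw [d₂_apply, h₁.1, h₁.2, h₂.1, h₂.2, sub_self, sub_self, add_zero]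

theorem groupCohomology_map_ruminD_zero
    (hfix : ∀ v ∈ ρ.invariants, T.a v = v ∧ T.b v = v ∧ T.c v = v) (n : ℕ) :
    groupCohomology.map (MonoidHom.id G) (T.ruminD n) 0 = 0 := by
  have hfix_prod (F : V × V) (hF : F ∈ (ρ.prod ρ).invariants) :
      (T.a F.1 = F.1 ∧ T.b F.1 = F.1 ∧ T.c F.1 = F.1) ∧
        T.a F.2 = F.2 ∧ T.b F.2 = F.2 ∧ T.c F.2 = F.2 :=
    ⟨hfix F.1 fun g => congr_arg Prod.fst (hF g), hfix F.2 fun g => congr_arg Prod.snd (hF g)⟩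
  refine groupCohomology_map_zero_eq_zero_of_invariants _ ?_
  match n with
  | 0 => exact fun v hv => d₀_eq_zero (hfix v hv).1 (hfix v hv).2.1
  | 1 =>
    intro F hF
    obtain ⟨⟨-, hb₁, hc₁⟩, ha₂, -, hc₂⟩ := hfix_prod F hF
    change T.d₁ F = 0
    rw [d₁_apply, d₂_eq_zero ⟨hb₁, hc₁⟩ ⟨ha₂, hc₂⟩, map_zero, hc₁, hc₂, sub_self, sub_self,
      Prod.mk_zero_zero, sub_self]
  | 2 =>
    intro F hF
    obtain ⟨⟨-, hb₁, hc₁⟩, ha₂, -, hc₂⟩ := hfix_prod F hF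
    exact d₂_eq_zero ⟨hb₁, hc₁⟩ ⟨ha₂, hc₂⟩
  | _ + 3 => exact fun _ _ => rfl

theorem IsIntegrable.groupCohomology_kernel_d₀_iso (hT : T.IsIntegrable)
    (hfix : ∀ v ∈ ρ.invariants, T.a v = v ∧ T.b v = v ∧ T.c v = v)
    (hρ : ∀ m, IsZero (groupCohomology (Rep.of ρ) (m + 1)))
    (hρρ : ∀ m, IsZero (groupCohomology (Rep.of (ρ.prod ρ)) (m + 1))) (n : ℕ) :
    Nonempty (groupCohomology (kernel (Rep.ofHom T.d₀)) n ≅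
      groupCohomology (ruminTerm ρ n) 0) :=
  groupCohomology_kernel_iso_of_acyclic_resolution n (ruminTerm ρ) T.ruminD T.ruminD_comp
    hT.ruminD_exact (isZero_groupCohomology_ruminTerm hρ hρρ) (groupCohomology_map_ruminD_zero hfix)

end Cohomology

end HeisenbergTriple

section Translation

variable {k G M : Type*} [Semiring k] [Monoid G] [AddCommMonoid M] [Module k M]

variable (k G M) in
/-- The representation of `G` on the functions `G → M` by right translation; it is the
representation coinduced from the trivial subgroup. -/
def rightTranslation : Representation k G (G → M) where
  toFun h := LinearMap.funLeft k M (· * h)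
  map_one' := by ext; simp [LinearMap.funLeft_apply]
  map_mul' _ _ := by ext; simp [LinearMap.funLeft_apply, mul_assoc]

theorem rightTranslation_apply (h : G) (f : G → M) (u : G) :
    rightTranslation k G M h f u = f (u * h) := rfl

theorem forall_rightTranslation_eq_self_iff {f : G → M} :
    (∀ h, rightTranslation k G M h f = f) ↔ ∀ u, f u = f 1 := by
  refine ⟨fun hf u => ?_, fun hf h => ?_⟩
  · simpa only [rightTranslation_apply, one_mul] using congr_fun (hf u) 1
  · ext u
    rw [rightTranslation_apply, hf, hf u]

/-- Left translation by `g` as a symmetry of the right translation representation. -/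
def leftTranslation (g : G) :
    (rightTranslation k G M).IntertwiningMap (rightTranslation k G M) where
  __ := LinearMap.funLeft k M (g * ·)
  isIntertwining' _ := by ext; simp [LinearMap.funLeft_apply, rightTranslation_apply, mul_assoc]

theorem leftTranslation_apply (g : G) (f : G → M) (u : G) :
    leftTranslation (k := k) g f u = f (g * u) := rfl

theorem leftTranslation_eq_self {f : G → M} (hf : ∀ h, rightTranslation k G M h f = f)
    (g : G) : leftTranslation (k := k) g f = f := by
  rw [forall_rightTranslation_eq_self_iff] at hf
  ext u
  rw [leftTranslation_apply, hf, hf u]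

variable (k G M) in
/-- The inclusion of the constant functions `G → M`. -/
def constantFunctions :
    (Representation.trivial k G M).IntertwiningMap (rightTranslation k G M) where
  __ := LinearMap.pi fun _ => LinearMap.id
  isIntertwining' _ := rfl

/-- The splitting of `M × M`-valued functions into their components. -/
noncomputable def rightTranslationProdEquiv :
    (rightTranslation k G (M × M)).Equiv ((rightTranslation k G M).prod (rightTranslation k G M)) :=
  .mk { Equiv.arrowProdEquivProdArrow G (fun _ => M) (fun _ => M) with
        map_add' := fun _ _ => rfl
        map_smul' := fun _ _ => rfl } fun _ => rfl

/-- Coinduction from the trivial subgroup imposes no condition on functions `G → M`. -/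
def coindBotEquiv (k G M : Type*) [Semiring k] [Group G] [AddCommMonoid M] [Module k M] :
    (Representation.coind (⊥ : Subgroup G).subtype (Representation.trivial k _ M)).Equiv
      (rightTranslation k G M) :=
  .mk (LinearEquiv.ofTop _ <| eq_top_iff.2 fun f _ g h => by
    rw [Subsingleton.elim g 1, map_one, one_mul, map_one, Module.End.one_apply]) fun _ => rfl

end Translation

section Shapiro

open Limits

universe u

variable {k G : Type u} (M : Type u) [CommRing k] [Group G] [AddCommGroup M] [Module k M]

/-- The Shapiro isomorphism for the trivial subgroup. -/
noncomputable def groupCohomologyRightTranslationIso (n : ℕ) :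
    groupCohomology (Rep.of (rightTranslation k G M)) n ≅
      groupCohomology (Rep.trivial k (⊥ : Subgroup G) M) n :=
  (groupCohomology.functor k G n).mapIso (Rep.mkIso (coindBotEquiv k G M)).symm ≪≫
    groupCohomology.coindIso (Rep.trivial k (⊥ : Subgroup G) M) n

theorem isZero_groupCohomology_rightTranslation (n : ℕ) :
    IsZero (groupCohomology (Rep.of (rightTranslation k G M)) (n + 1)) :=
  (isZero_groupCohomology_succ_of_subsingleton _ n).of_iso
    (groupCohomologyRightTranslationIso M (n + 1))

/-- The invariants of the right translation representation on `G → M` are a copy of `M`. -/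
noncomputable def groupCohomologyRightTranslationZeroIso :
    groupCohomology (Rep.of (rightTranslation k G M)) 0 ≅ ModuleCat.of k M :=
  groupCohomologyRightTranslationIso M 0 ≪≫
    groupCohomology.H0IsoOfIsTrivial (Rep.trivial k (⊥ : Subgroup G) M)

/-- The cohomology of two copies of `G → M`, as that of the functions `G → M × M`. -/
noncomputable def groupCohomologyRightTranslationProdIso (n : ℕ) :
    groupCohomology (Rep.of ((rightTranslation k G M).prod (rightTranslation k G M))) n ≅
      groupCohomology (Rep.of (rightTranslation k G (M × M))) n :=
  (groupCohomology.functor k G n).mapIso (Rep.mkIso rightTranslationProdEquiv).symm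

end Shapiro

theorem exists_antidifference {M : Type*} [AddCommGroup M] (f : ℤ → M) :
    ∃ F : ℤ → M, ∀ n, F (n + 1) - F n = f n := by
  let F : ℤ → M := fun n =>
    Int.inductionOn' (motive := fun _ => M) n 0 0 (fun m _ s => s + f m) fun m _ s => s - f (m - 1)
  refine ⟨F, fun n => ?_⟩
  rcases le_or_gt 0 n with hn | hn
  · have : F (n + 1) = F n + f n := Int.inductionOn'_add_one hn
    rw [this, add_sub_cancel_left]
  · have : F (n + 1 - 1) = F (n + 1) - f (n + 1 - 1) := Int.inductionOn'_sub_one hn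
    rw [add_sub_cancel_right] at this
    rw [this, sub_sub_cancel]

namespace Heis

section Rumin

variable {k M : Type*} [CommRing k] [AddCommGroup M] [Module k M]

variable (k M) in
/-- The Heisenberg triple of left translations by the standard generators `(1, 0, 0)`, `(0, 1, 0)`
and `(0, 0, 1)` on the functions `Heis → M`. -/
def translationTriple : HeisenbergTriple (rightTranslation k Heis M) where
  a := leftTranslation ⟨1, 0, 0⟩
  b := leftTranslation ⟨0, 1, 0⟩
  c := leftTranslation ⟨0, 0, 1⟩
  b_a f := by ext u; simp only [leftTranslation_apply, mul_def]; congr 2 <;> ring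
  a_c f := by ext u; simp only [leftTranslation_apply, mul_def]; congr 2 <;> ring
  b_c f := by ext u; simp only [leftTranslation_apply, mul_def]; congr 2 <;> ring

theorem translationTriple_a_apply (f : Heis → M) (u : Heis) :
    (translationTriple k M).a f u = f ⟨u.x + 1, u.y, u.z + u.y⟩ := by
  simp [translationTriple, leftTranslation_apply, mul_def, add_comm]

theorem translationTriple_b_apply (f : Heis → M) (u : Heis) :
    (translationTriple k M).b f u = f ⟨u.x, u.y + 1, u.z⟩ := by
  simp [translationTriple, leftTranslation_apply, mul_def, add_comm]

theorem translationTriple_c_apply (f : Heis → M) (u : Heis) :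
    (translationTriple k M).c f u = f ⟨u.x, u.y, u.z + 1⟩ := by
  simp [translationTriple, leftTranslation_apply, mul_def, add_comm]

variable {f : Heis → M}

theorem apply_eq_of_fixed_c (hc : (translationTriple k M).c f = f) (u : Heis) :
    f u = f ⟨u.x, u.y, 0⟩ := by
  have hf : Function.Periodic (fun n => f ⟨u.x, u.y, n⟩) 1 := fun n => by
    simpa only [translationTriple_c_apply] using congr_fun hc ⟨u.x, u.y, n⟩
  simpa using hf.int_mul_eq u.z

theorem apply_eq_of_fixed_c_b (hc : (translationTriple k M).c f = f)
    (hb : (translationTriple k M).b f = f) (u : Heis) : f u = f ⟨u.x, 0, 0⟩ := by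
  have hf : Function.Periodic (fun n => f ⟨u.x, n, 0⟩) 1 := fun n => by
    simpa only [translationTriple_b_apply] using congr_fun hb ⟨u.x, n, 0⟩
  rw [apply_eq_of_fixed_c hc]
  simpa using hf.int_mul_eq u.y

theorem apply_eq_of_fixed_c_b_a (hc : (translationTriple k M).c f = f)
    (hb : (translationTriple k M).b f = f) (ha : (translationTriple k M).a f = f) (u : Heis) :
    f u = f 1 := by
  have hf : Function.Periodic (fun n => f ⟨n, 0, 0⟩) 1 := fun n => by
    simpa only [translationTriple_a_apply, add_zero] using congr_fun ha ⟨n, 0, 0⟩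
  rw [apply_eq_of_fixed_c_b hc hb]
  simpa [one_def] using hf.int_mul_eq u.x

variable (k M) in
theorem translationTriple_isIntegrable : (translationTriple k M).IsIntegrable where
  c_sub_one f := by
    choose F hF using fun x y => exists_antidifference fun n => f ⟨x, y, n⟩
    refine ⟨fun u => F u.x u.y u.z, ?_⟩
    ext u
    rw [Pi.sub_apply, translationTriple_c_apply, hF]
  b_sub_one f hc := by
    choose F hF using fun x => exists_antidifference fun n => f ⟨x, n, 0⟩
    refine ⟨fun u => F u.x u.y, ?_, ?_⟩
    · ext u
      rw [translationTriple_c_apply]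
    · ext u
      rw [Pi.sub_apply, translationTriple_b_apply, hF u.x, ← apply_eq_of_fixed_c hc u]
  a_sub_one f hc hb := by
    obtain ⟨F, hF⟩ := exists_antidifference fun n => f ⟨n, 0, 0⟩
    refine ⟨fun u => F u.x, ?_, ?_, ?_⟩
    · ext u
      rw [translationTriple_c_apply]
    · ext u
      rw [translationTriple_b_apply]
    · ext u
      rw [Pi.sub_apply, translationTriple_a_apply, hF, ← apply_eq_of_fixed_c_b hc hb]

theorem exact_constantFunctions_d₀ :
    Function.Exact (constantFunctions k Heis M) (translationTriple k M).d₀ := by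
  refine fun f => ⟨fun hf => ?_, ?_⟩
  · obtain ⟨ha, hb⟩ := Prod.mk_eq_zero.1 hf
    have hc := (translationTriple k M).d₂_d₀ f
    rw [hf, map_zero, eq_comm] at hc
    exact ⟨f 1, funext fun u =>
      (apply_eq_of_fixed_c_b_a (sub_eq_zero.1 hc) (sub_eq_zero.1 hb) (sub_eq_zero.1 ha) u).symm⟩
  · rintro ⟨m, rfl⟩
    exact Prod.ext (funext fun _ => sub_self m) (funext fun _ => sub_self m)

end Rumin

section Cohomology

open Limits

variable (k M : Type) [CommRing k] [AddCommGroup M] [Module k M]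

theorem trivial_iso_kernel_d₀ :
    Nonempty (Rep.trivial k Heis M ≅ kernel (Rep.ofHom (translationTriple k M).d₀)) := by
  have hcomp : Rep.ofHom (constantFunctions k Heis M) ≫ Rep.ofHom (translationTriple k M).d₀ = 0 :=
    Rep.hom_ext <| Representation.IntertwiningMap.ext <| LinearMap.ext
      exact_constantFunctions_d₀.apply_apply_eq_zero
  have : Mono (Rep.ofHom (constantFunctions k Heis M)) :=
    (Rep.mono_iff_injective _).2 fun _ _ h => congr_fun h 1
  have hexact := rep_exact_of_function_exact (.mk _ _ hcomp) exact_constantFunctions_d₀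
  exact ⟨hexact.fIsKernel.conePointUniqueUpToIso (limit.isLimit _)⟩

theorem groupCohomology_trivial_iso_ruminTerm (n : ℕ) :
    Nonempty (groupCohomology (Rep.trivial k Heis M) n ≅
      groupCohomology (HeisenbergTriple.ruminTerm (rightTranslation k Heis M) n) 0) := by
  obtain ⟨e⟩ := trivial_iso_kernel_d₀ k M
  obtain ⟨e'⟩ := (translationTriple_isIntegrable k M).groupCohomology_kernel_d₀_iso
    (fun f hf => ⟨leftTranslation_eq_self hf _, leftTranslation_eq_self hf _,
      leftTranslation_eq_self hf _⟩)
    (isZero_groupCohomology_rightTranslation M)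
    (fun m => (isZero_groupCohomology_rightTranslation (M × M) m).of_iso
      (groupCohomologyRightTranslationProdIso M (m + 1))) n
  exact ⟨(groupCohomology.functor k Heis n).mapIso e ≪≫ e'⟩

theorem group_cohomology_general :
    Nonempty (groupCohomology (Rep.trivial k Heis M) 0 ≅ ModuleCat.of k M) ∧
    Nonempty (groupCohomology (Rep.trivial k Heis M) 1 ≅ ModuleCat.of k (M × M)) ∧
    Nonempty (groupCohomology (Rep.trivial k Heis M) 2 ≅ ModuleCat.of k (M × M)) ∧
    Nonempty (groupCohomology (Rep.trivial k Heis M) 3 ≅ ModuleCat.of k M) ∧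
    ∀ n : ℕ, 4 ≤ n → Subsingleton (groupCohomology (Rep.trivial k Heis M) n) := by
  have e n := groupCohomology_trivial_iso_ruminTerm k M n
  let eM := groupCohomologyRightTranslationZeroIso (k := k) (G := Heis) M
  let eMM := groupCohomologyRightTranslationProdIso (k := k) (G := Heis) M 0 ≪≫
    groupCohomologyRightTranslationZeroIso (M × M)
  refine ⟨(e 0).map (· ≪≫ eM), (e 1).map (· ≪≫ eMM), (e 2).map (· ≪≫ eMM), (e 3).map (· ≪≫ eM),
    fun n hn => ?_⟩
  obtain ⟨m, rfl⟩ := Nat.exists_eq_add_of_le' hn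
  obtain ⟨e₄⟩ := e (m + 4)
  exact ModuleCat.subsingleton_of_isZero
    ((HeisenbergTriple.isZero_groupCohomology_ruminTerm_add_four m 0).of_iso e₄)

end Cohomology

end Heis

/-- The group cohomology of the discrete Heisenberg group `ℋ₁` with coefficients in `ℤ`
(as a trivial module) satisfies `H⁰ ≅ ℤ`, `H¹ ≅ ℤ²`, `H² ≅ ℤ²`, `H³ ≅ ℤ` and `Hᵏ = 0`
for all `k ≥ 4`. -/
theorem Heis.group_cohomology :
    Nonempty (groupCohomology (Rep.trivial ℤ Heis ℤ) 0 ≅ ModuleCat.of ℤ ℤ) ∧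
    Nonempty (groupCohomology (Rep.trivial ℤ Heis ℤ) 1 ≅ ModuleCat.of ℤ (ℤ × ℤ)) ∧
    Nonempty (groupCohomology (Rep.trivial ℤ Heis ℤ) 2 ≅ ModuleCat.of ℤ (ℤ × ℤ)) ∧
    Nonempty (groupCohomology (Rep.trivial ℤ Heis ℤ) 3 ≅ ModuleCat.of ℤ ℤ) ∧
    ∀ k : ℕ, 4 ≤ k → Subsingleton (groupCohomology (Rep.trivial ℤ Heis ℤ) k) :=
  Heis.group_cohomology_general ℤ ℤ
end
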